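/- arXiv:2509.11221 — 3 statements merged into one kernel-verified Lean document; each statement's English description precedes it below -/
import Mathlib

section
/- Let ι and κ be nonempty finite types and let ρ and σ be positive definite density matrices on ℂ indexed by (ι × κ) × (ι × κ). Then the relative entropy decreases under the partial trace: Re Tr(Tr_b(ρ)·log(Tr_b(ρ)) − Tr_b(ρ)·log(Tr_b(σ))) ≤ Re Tr(ρ·log ρ − ρ·log σ). -/
/-!
For positive definite `ρ = ∑ pᵢ |eᵢ⟩⟨eᵢ|` and `σ = ∑ qⱼ |fⱼ⟩⟨fⱼ|`, set `wᵢⱼ = pᵢ |⟨eᵢ, fⱼ⟩|²` and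
`rᵢⱼ = qⱼ / pᵢ` (the spectral data of the relative modular operator `X ↦ σ X ρ⁻¹` in the vector
`ρ^{1/2}`). Then `Tr ρ = ∑ w`, the relative entropy is `-∑ w log r`, and for `t ≥ 0` the resolvent
expectation `∑ w / (r + t)` is the maximum over all matrices `X` of the quadratic expression
`2 Re Tr(X ρ) - Tr(σ X* X) - t Tr(ρ X X*)` (`exists_spectralData`).

Evaluated at `X ⊗ 1`, this expression for `(ρ, σ)` is the one for `(Tr_b ρ, Tr_b σ)` at `X`, so the
maximum can only decrease under the partial trace. As `1 / (r + t)` is the derivative of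
`log (r + t)`, comparing the resolvent expectations for all `t` and using
`log (r + t) - log t → 0` as `t → ∞` gives the comparison of the relative entropies
(`sum_log_le_of_sum_div_le`).
-/

open Matrix ComplexOrder Kronecker

/-- The partial trace over the second tensor factor: `trB A i j = ∑ k, A (i,k) (j,k)`. -/
noncomputable def trB {ι κ : Type*} [Fintype κ] (A : Matrix (ι × κ) (ι × κ) ℂ) :
    Matrix ι ι ℂ :=
  Matrix.of fun i j => ∑ k : κ, A (i, k) (j, k)

/-- Real power of a matrix, applied via the continuous functional calculus (spectrally). -/
noncomputable def mpow {ι : Type*} [Fintype ι] [DecidableEq ι]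
    (M : Matrix ι ι ℂ) (s : ℝ) : Matrix ι ι ℂ :=
  cfc (fun x : ℝ => Real.rpow x s) M

/-- Logarithm of a matrix, applied via the continuous functional calculus (spectrally),
with the convention `Real.log 0 = 0`. -/
noncomputable def mlog {ι : Type*} [Fintype ι] [DecidableEq ι]
    (M : Matrix ι ι ℂ) : Matrix ι ι ℂ :=
  cfc Real.log M

open Filter Topology

/-- The quadratic expression `2 Re Tr(X ρ) - Tr(σ X* X) - t Tr(ρ X X*)` whose maximum over `X` is
the resolvent expectation `⟨ρ^{1/2}, (Δ + t)⁻¹ ρ^{1/2}⟩` of the relative modular operator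
`Δ X = σ X ρ⁻¹`. -/
noncomputable def relForm {n : Type*} [Fintype n] (ρ σ : Matrix n n ℂ) (t : ℝ)
    (X : Matrix n n ℂ) : ℝ :=
  2 * (X * ρ).trace.re - (σ * (Xᴴ * X)).trace.re - t * (ρ * (X * Xᴴ)).trace.re

lemma exists_diagonalization {n : Type*} [Fintype n] [DecidableEq n] {A : Matrix n n ℂ}
    (hA : A.PosDef) : ∃ (U : Matrix n n ℂ) (p : n → ℝ), Uᴴ * U = 1 ∧ U * Uᴴ = 1 ∧ (∀ i, 0 < p i) ∧
      A = U * diagonal (fun i => (p i : ℂ)) * Uᴴ ∧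
      mlog A = U * diagonal (fun i => (Real.log (p i) : ℂ)) * Uᴴ := by
  refine ⟨hA.1.eigenvectorUnitary, hA.1.eigenvalues, ?_, ?_, hA.eigenvalues_pos, ?_, ?_⟩
  · exact Unitary.coe_star_mul_self hA.1.eigenvectorUnitary
  · exact Unitary.coe_mul_star_self hA.1.eigenvectorUnitary
  · conv_lhs => rw [hA.1.spectral_theorem]
    rfl
  · rw [mlog, hA.1.cfc_eq]
    rfl

/-- Traces of products of two matrices diagonalized in different bases are sums weighted by the
squared overlaps of the basis vectors. -/
lemma trace_mul_diag {n : Type*} [Fintype n] [DecidableEq n] (U W : Matrix n n ℂ) (f g : n → ℝ) :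
    ((U * diagonal (fun i => (f i : ℂ)) * Uᴴ) * (W * diagonal (fun i => (g i : ℂ)) * Wᴴ)).trace.re
      = ∑ i, ∑ j, f i * g j * Complex.normSq ((Uᴴ * W) i j) := by
  have h : ((U * diagonal (fun i => (f i : ℂ)) * Uᴴ) *
      (W * diagonal (fun i => (g i : ℂ)) * Wᴴ)).trace =
      (diagonal (fun i => (f i : ℂ)) * (Uᴴ * W) * diagonal (fun i => (g i : ℂ)) *
        (Uᴴ * W)ᴴ).trace := by
    rw [conjTranspose_mul, conjTranspose_conjTranspose]
    simp only [Matrix.mul_assoc]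
    rw [trace_mul_comm]
    simp only [Matrix.mul_assoc]
  rw [h, trace, Complex.re_sum]
  refine Finset.sum_congr rfl fun i _ => ?_
  rw [diag_apply, mul_apply, Complex.re_sum]
  refine Finset.sum_congr rfl fun j _ => ?_
  rw [mul_diagonal, diagonal_mul, conjTranspose_apply, Complex.normSq_apply]
  simp [Complex.mul_re, Complex.mul_im]
  ring

/-- In the eigenbases of `ρ` and `σ` the form `relForm` decouples into one scalar quadratic form
for each matrix entry of `X`. -/
lemma relForm_diag {n : Type*} [Fintype n] [DecidableEq n] {U W : Matrix n n ℂ} (p q : n → ℝ)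
    (hU : Uᴴ * U = 1) (hW : Wᴴ * W = 1) (t : ℝ) (Y : Matrix n n ℂ) :
    relForm (U * diagonal (fun i => (p i : ℂ)) * Uᴴ) (W * diagonal (fun i => (q i : ℂ)) * Wᴴ) t
      (U * Y * Wᴴ) = ∑ i, ∑ j, (2 * (p i * ((Y i j) * star ((Uᴴ * W) i j)).re)
        - (q j + t * p i) * Complex.normSq (Y i j)) := by
  have h1 : (U * Y * Wᴴ * (U * diagonal (fun i => (p i : ℂ)) * Uᴴ)).trace =
      (Y * ((Uᴴ * W)ᴴ * diagonal (fun i => (p i : ℂ)))).trace := by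
    rw [conjTranspose_mul, conjTranspose_conjTranspose]
    simp only [Matrix.mul_assoc]
    rw [trace_mul_comm]
    simp only [Matrix.mul_assoc, hU, Matrix.mul_one]
  have h2 : (W * diagonal (fun i => (q i : ℂ)) * Wᴴ * ((U * Y * Wᴴ)ᴴ * (U * Y * Wᴴ))).trace =
      (Y * (diagonal (fun i => (q i : ℂ)) * Yᴴ)).trace := by
    simp only [conjTranspose_mul, conjTranspose_conjTranspose, Matrix.mul_assoc]
    rw [← Matrix.mul_assoc Uᴴ U, hU, Matrix.one_mul, ← Matrix.mul_assoc Wᴴ W, hW, Matrix.one_mul,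
      trace_mul_comm]
    simp only [Matrix.mul_assoc, hW, Matrix.mul_one]
    rw [← Matrix.mul_assoc, trace_mul_comm]
  have h3 : (U * diagonal (fun i => (p i : ℂ)) * Uᴴ * ((U * Y * Wᴴ) * (U * Y * Wᴴ)ᴴ)).trace =
      (diagonal (fun i => (p i : ℂ)) * Y * Yᴴ).trace := by
    simp only [conjTranspose_mul, conjTranspose_conjTranspose, Matrix.mul_assoc]
    rw [← Matrix.mul_assoc Uᴴ U, hU, Matrix.one_mul, ← Matrix.mul_assoc Wᴴ W, hW, Matrix.one_mul,
      trace_mul_comm]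
    simp only [Matrix.mul_assoc, hU, Matrix.mul_one]
  rw [relForm, h1, h2, h3]
  simp only [trace, diag_apply, mul_apply (M := Y), mul_apply (M := _ * Y), Complex.re_sum,
    Finset.mul_sum, ← Finset.sum_sub_distrib, mul_diagonal, diagonal_mul, conjTranspose_apply,
    Complex.normSq_apply]
  refine Finset.sum_congr rfl fun i _ => Finset.sum_congr rfl fun j _ => ?_
  simp [Complex.mul_re, Complex.mul_im]
  ring

/-- The spectral data `(w, r)` of the relative modular operator of `σ` with respect to `ρ`: they
compute the trace of `ρ`, the relative entropy, and the maxima of `relForm`. -/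
lemma exists_spectralData {n : Type*} [Fintype n] [DecidableEq n] {ρ σ : Matrix n n ℂ}
    (hρ : ρ.PosDef) (hσ : σ.PosDef) : ∃ w r : n × n → ℝ, (∀ x, 0 < r x) ∧
      ∑ x, w x = ρ.trace.re ∧
      (ρ * mlog ρ - ρ * mlog σ).trace.re = -∑ x, w x * Real.log (r x) ∧
      ∀ t, 0 ≤ t → IsGreatest (Set.range (relForm ρ σ t)) (∑ x, w x / (r x + t)) := by
  obtain ⟨U, p, hU, hU', hp, hρ1, hρ2⟩ := exists_diagonalization hρ
  obtain ⟨W, q, hW, hW', hq, hσ1, hσ2⟩ := exists_diagonalization hσ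
  have hone : W * diagonal (fun _ => ((1 : ℝ) : ℂ)) * Wᴴ = 1 := by
    simp [hW']
  refine ⟨fun x => p x.1 * Complex.normSq ((Uᴴ * W) x.1 x.2), fun x => q x.2 / p x.1,
    fun x => div_pos (hq _) (hp _), ?_, ?_, fun t ht => ?_⟩
  · have h := trace_mul_diag U W p (fun _ => 1)
    rw [hone, Matrix.mul_one, ← hρ1] at h
    rw [h, Fintype.sum_prod_type]
    simp
  · have hmul : ρ * mlog ρ =
        U * diagonal (fun i => ((p i * Real.log (p i) : ℝ) : ℂ)) * Uᴴ := by
      rw [hρ2]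
      conv_lhs => rw [hρ1]
      simp only [Matrix.mul_assoc]
      rw [← Matrix.mul_assoc Uᴴ U, hU, Matrix.one_mul, ← Matrix.mul_assoc (diagonal _),
        diagonal_mul_diagonal]
      simp
    have h1 := trace_mul_diag U W (fun i => p i * Real.log (p i)) (fun _ => 1)
    rw [hone, Matrix.mul_one, ← hmul] at h1
    have h2 := trace_mul_diag U W p (fun j => Real.log (q j))
    rw [← hρ1, ← hσ2] at h2
    rw [trace_sub, Complex.sub_re, h1, h2, Fintype.sum_prod_type]
    simp only [← Finset.sum_sub_distrib, ← Finset.sum_neg_distrib]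
    refine Finset.sum_congr rfl fun i _ => Finset.sum_congr rfl fun j _ => ?_
    rw [Real.log_div (hq j).ne' (hp i).ne']
    ring
  · have hs : ∀ i j, 0 < q j + t * p i := fun i j =>
      add_pos_of_pos_of_nonneg (hq j) (mul_nonneg ht (hp i).le)
    have hr : ∀ i j, p i * Complex.normSq ((Uᴴ * W) i j) / (q j / p i + t) =
        p i ^ 2 * Complex.normSq ((Uᴴ * W) i j) / (q j + t * p i) := fun i j => by
      have h1 := hs i j
      have h2 := hp i
      have h3 : q j / p i + t = (q j + t * p i) / p i := by field_simp
      rw [h3]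
      field_simp
    rw [Fintype.sum_prod_type]
    simp only [hr]
    constructor
    -- the maximizer is the matrix with entries `cᵢⱼ pᵢ / (qⱼ + t pᵢ)` in the two eigenbases
    · refine ⟨U * (of fun i j => (Uᴴ * W) i j * ((p i / (q j + t * p i) : ℝ) : ℂ)) * Wᴴ, ?_⟩
      rw [hρ1, hσ1, relForm_diag p q hU hW]
      refine Finset.sum_congr rfl fun i _ => Finset.sum_congr rfl fun j _ => ?_
      have h1 := hs i j
      rw [of_apply, Complex.normSq_mul, Complex.normSq_ofReal, mul_right_comm, Complex.star_def,
        Complex.mul_conj, ← Complex.ofReal_mul, Complex.ofReal_re]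
      field_simp
      ring
    · rintro _ ⟨X, rfl⟩
      obtain ⟨Y, rfl⟩ : ∃ Y, X = U * Y * Wᴴ := ⟨Uᴴ * X * W, by
        simp only [Matrix.mul_assoc, hW', Matrix.mul_one]
        rw [← Matrix.mul_assoc, hU', Matrix.one_mul]⟩
      rw [hρ1, hσ1, relForm_diag p q hU hW]
      refine Finset.sum_le_sum fun i _ => Finset.sum_le_sum fun j _ => ?_
      have h1 := hs i j
      rw [le_div_iff₀ h1]
      generalize (Uᴴ * W) i j = c
      generalize Y i j = y
      generalize q j + t * p i = s at h1 ⊢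
      simp only [Complex.normSq_apply, Complex.star_def, Complex.mul_re, Complex.conj_re,
        Complex.conj_im]
      nlinarith [sq_nonneg (s * y.re - p i * c.re), sq_nonneg (s * y.im - p i * c.im)]

/-- Comparing `∑ w / (r + t)` for all `t ≥ 0` compares `∑ w log r`, since
`∑ w log (r + t) - ∑ v log (s + t)` is monotone in `t` and vanishes at infinity. -/
lemma sum_log_le_of_sum_div_le {α β : Type*} [Fintype α] [Fintype β] (w r : α → ℝ) (v s : β → ℝ)
    (hr : ∀ x, 0 < r x) (hs : ∀ y, 0 < s y) (hsum : ∑ x, w x = ∑ y, v y)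
    (h : ∀ t, 0 ≤ t → ∑ y, v y / (s y + t) ≤ ∑ x, w x / (r x + t)) :
    ∑ x, w x * Real.log (r x) ≤ ∑ y, v y * Real.log (s y) := by
  set D : ℝ → ℝ := fun t =>
    ∑ x, w x * Real.log (t + r x) - ∑ y, v y * Real.log (t + s y) with hD
  have hderiv : ∀ t, 0 ≤ t →
      HasDerivAt D (∑ x, w x / (r x + t) - ∑ y, v y / (s y + t)) t := by
    intro t ht
    refine HasDerivAt.sub (HasDerivAt.fun_sum fun x _ => ?_) (HasDerivAt.fun_sum fun y _ => ?_)
    · have := (((hasDerivAt_id t).add_const (r x)).log (add_pos_of_nonneg_of_pos ht (hr x)).ne')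
      simpa [div_eq_mul_inv, add_comm] using this.const_mul (w x)
    · have := (((hasDerivAt_id t).add_const (s y)).log (add_pos_of_nonneg_of_pos ht (hs y)).ne')
      simpa [div_eq_mul_inv, add_comm] using this.const_mul (v y)
  have hmono : MonotoneOn D (Set.Ici 0) := by
    refine monotoneOn_of_deriv_nonneg (convex_Ici 0)
      (fun t ht => (hderiv t ht).continuousAt.continuousWithinAt) ?_ ?_
    · intro t ht
      rw [interior_Ici] at ht
      exact (hderiv t (le_of_lt ht)).differentiableAt.differentiableWithinAt
    · intro t ht
      rw [interior_Ici] at ht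
      rw [(hderiv t (le_of_lt ht)).deriv]
      exact sub_nonneg.mpr (h t (le_of_lt ht))
  have hlim : Tendsto D atTop (𝓝 0) := by
    -- subtracting `log t` in every term changes nothing because `∑ w = ∑ v`
    have heq : D = fun t => ∑ x, w x * (Real.log (t + r x) - Real.log t) -
        ∑ y, v y * (Real.log (t + s y) - Real.log t) := by
      funext t
      simp only [hD, mul_sub, Finset.sum_sub_distrib, ← Finset.sum_mul, hsum]
      ring
    rw [heq]
    have h1 : Tendsto (fun t => ∑ x, w x * (Real.log (t + r x) - Real.log t)) atTop
        (𝓝 (∑ x, w x * 0)) :=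
      tendsto_finsetSum _ fun x _ => (Real.tendsto_log_comp_add_sub_log (r x)).const_mul _
    have h2 : Tendsto (fun t => ∑ y, v y * (Real.log (t + s y) - Real.log t)) atTop
        (𝓝 (∑ y, v y * 0)) :=
      tendsto_finsetSum _ fun y _ => (Real.tendsto_log_comp_add_sub_log (s y)).const_mul _
    simpa using h1.sub h2
  have h0 : D 0 ≤ 0 := by
    refine ge_of_tendsto hlim ?_
    filter_upwards [eventually_ge_atTop 0] with t ht
    exact hmono Set.self_mem_Ici ht ht
  simpa [hD] using h0

lemma trace_trB {ι κ : Type*} [Fintype ι] [Fintype κ] (A : Matrix (ι × κ) (ι × κ) ℂ) :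
    (trB A).trace = A.trace := by
  simp [trace, trB, Fintype.sum_prod_type]

/-- The partial trace is adjoint to `X ↦ X ⊗ 1` for the trace pairing. -/
lemma trace_trB_mul {ι κ : Type*} [Fintype ι] [Fintype κ] [DecidableEq κ]
    (A : Matrix (ι × κ) (ι × κ) ℂ) (X : Matrix ι ι ℂ) :
    (trB A * X).trace = (A * (X ⊗ₖ (1 : Matrix κ κ ℂ))).trace := by
  simp only [trace, trB, diag_apply, mul_apply, of_apply, Fintype.sum_prod_type,
    kroneckerMap_apply, one_apply, mul_ite, mul_one, mul_zero, Finset.sum_ite_eq',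
    Finset.mem_univ, if_true, Finset.sum_mul]
  exact Finset.sum_congr rfl fun i _ => Finset.sum_comm

lemma trB_posDef {ι κ : Type*} [Fintype ι] [Fintype κ] [Nonempty κ]
    {A : Matrix (ι × κ) (ι × κ) ℂ} (hA : A.PosDef) : (trB A).PosDef := by
  have h : trB A = ∑ k : κ, A.submatrix (fun i => (i, k)) (fun i => (i, k)) := by
    ext i j
    simp [trB, Matrix.sum_apply]
  rw [h]
  refine Finset.sum_induction_nonempty _ Matrix.PosDef (fun _ _ h1 h2 => h1.add h2)
    Finset.univ_nonempty fun k _ => hA.submatrix fun i j hij => (Prod.ext_iff.mp hij).1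

lemma relForm_trB {ι κ : Type*} [Fintype ι] [DecidableEq ι] [Fintype κ] [DecidableEq κ]
    (ρ σ : Matrix (ι × κ) (ι × κ) ℂ) (t : ℝ) (X : Matrix ι ι ℂ) :
    relForm (trB ρ) (trB σ) t X = relForm ρ σ t (X ⊗ₖ (1 : Matrix κ κ ℂ)) := by
  rw [relForm, relForm, trace_mul_comm X, trace_mul_comm (X ⊗ₖ (1 : Matrix κ κ ℂ)),
    trace_trB_mul, trace_trB_mul, trace_trB_mul, conjTranspose_kronecker, conjTranspose_one,
    ← mul_kronecker_mul, ← mul_kronecker_mul, Matrix.mul_one]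

/-- **Monotonicity of the relative entropy under the partial trace** for positive definite
density matrices:
`Re Tr(Tr_b(ρ)·log Tr_b(ρ) − Tr_b(ρ)·log Tr_b(σ)) ≤ Re Tr(ρ·log ρ − ρ·log σ)`. -/
theorem relEntropy_monotone_partialTrace_posDef {ι κ : Type*}
    [Fintype ι] [DecidableEq ι] [Nonempty ι] [Fintype κ] [DecidableEq κ] [Nonempty κ]
    (ρ σ : Matrix (ι × κ) (ι × κ) ℂ) (hρ : ρ.PosDef) (hρtr : ρ.trace = 1)
    (hσ : σ.PosDef) (hσtr : σ.trace = 1) :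
    (trB ρ * mlog (trB ρ) - trB ρ * mlog (trB σ)).trace.re ≤
      (ρ * mlog ρ - ρ * mlog σ).trace.re := by
  obtain ⟨w, r, hr, hw, hS, hF⟩ := exists_spectralData hρ hσ
  obtain ⟨v, s, hs, hv, hS', hF'⟩ := exists_spectralData (trB_posDef hρ) (trB_posDef hσ)
  rw [hS, hS', neg_le_neg_iff]
  refine sum_log_le_of_sum_div_le w r v s hr hs ?_ fun t ht => ?_
  · rw [hw, hv, trace_trB]
  · obtain ⟨X, hX⟩ := (hF' t ht).1
    rw [← hX, relForm_trB]
    exact (hF t ht).2 ⟨_, rfl⟩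
end

section
/- Let ρ and σ be positive definite density matrices on ℂ indexed by a nonempty finite type ι. Then the function t ↦ Re Tr(ρ^{1−t} · σ^{t}) has derivative at t = 0 equal to Re Tr(ρ·log σ) − Re Tr(ρ·log ρ), i.e. equal to −S(ρ‖σ). (This identifies the relative entropy as minus the right derivative at t = 0 of the interpolation t ↦ Tr(ρ^{1−t} σ^{t}).) -/
/-!
For a Hermitian matrix the functional calculus is `U * diagonal (f ∘ λ) * U⋆`, so each entry of
`M ^ s` is a finite linear combination of the scalar functions `s ↦ λ ^ s`. For positive definite
`M` these are differentiable with derivative `λ ^ s * log λ`, hence `d/ds M ^ s` is the functional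
calculus of `x ↦ x ^ s * log x` (`hasDerivAt_mpow_apply`). The product rule for
`∑ i j, (ρ ^ (1 - t)) i j * (σ ^ t) j i` at `t = 0`, with `ρ ^ 1 = ρ` and `σ ^ 0 = 1`, then gives
`Tr (ρ * log σ) - Tr (ρ * log ρ)`.
-/

open Matrix ComplexOrder Kronecker

/-- Entries of the functional calculus in terms of an eigenbasis. -/
lemma cfc_apply_eq_sum {ι : Type*} [Fintype ι] [DecidableEq ι] {M : Matrix ι ι ℂ}
    (hM : M.IsHermitian) (f : ℝ → ℝ) (i j : ι) :
    cfc f M i j = ∑ k, (hM.eigenvectorUnitary : Matrix ι ι ℂ) i k * (f (hM.eigenvalues k) : ℂ) *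
      star ((hM.eigenvectorUnitary : Matrix ι ι ℂ) j k) := by
  rw [hM.cfc_eq, Matrix.IsHermitian.cfc, Unitary.conjStarAlgAut_apply, Matrix.mul_apply]
  simp [Matrix.mul_diagonal, Matrix.star_apply]

lemma hasDerivAt_mpow_apply {ι : Type*} [Fintype ι] [DecidableEq ι] {M : Matrix ι ι ℂ}
    (hM : M.PosDef) (s : ℝ) (i j : ι) :
    HasDerivAt (fun t : ℝ => mpow M t i j)
      (cfc (fun x : ℝ => x ^ s * Real.log x) M i j) s := by
  simp only [mpow, cfc_apply_eq_sum hM.isHermitian]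
  refine HasDerivAt.fun_sum fun k _ => ?_
  exact (((Real.hasStrictDerivAt_const_rpow (hM.eigenvalues_pos k) s).hasDerivAt.ofReal_comp).const_mul
    _).mul_const _

lemma mpow_zero {ι : Type*} [Fintype ι] [DecidableEq ι] {M : Matrix ι ι ℂ}
    (hM : M.PosDef) : mpow M 0 = 1 := by
  have h : IsSelfAdjoint M := hM.isHermitian
  simp only [mpow, Real.rpow_eq_pow, Real.rpow_zero]
  exact cfc_const_one ℝ M

lemma mpow_one {ι : Type*} [Fintype ι] [DecidableEq ι] {M : Matrix ι ι ℂ}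
    (hM : M.PosDef) : mpow M 1 = M := by
  have h : IsSelfAdjoint M := hM.isHermitian
  simp only [mpow, Real.rpow_eq_pow, Real.rpow_one]
  exact cfc_id' ℝ M

lemma cfc_mul_log {ι : Type*} [Fintype ι] [DecidableEq ι] {M : Matrix ι ι ℂ}
    (hM : M.PosDef) : cfc (fun x : ℝ => x ^ (1 : ℝ) * Real.log x) M = M * mlog M := by
  have h : IsSelfAdjoint M := hM.isHermitian
  -- On the finite spectrum of a matrix every function is continuous.
  have hc (f : ℝ → ℝ) : ContinuousOn f (spectrum ℝ M) :=
    (Matrix.finite_real_spectrum (A := M)).continuousOn f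
  simp only [Real.rpow_one]
  rw [cfc_mul (fun x : ℝ => x) Real.log M (hc _) (hc _), cfc_id' ℝ M, mlog]

/-- **The relative entropy as minus the derivative of the interpolation `t ↦ Tr(ρ^{1−t} σ^t)`.**
For positive definite density matrices `ρ`, `σ`, the function `t ↦ Re Tr(ρ^{1−t} · σ^t)` has
derivative at `t = 0` equal to `Re Tr(ρ·log σ) − Re Tr(ρ·log ρ) = −S(ρ‖σ)`. -/
theorem hasDerivAt_interpolation_relEntropy {ι : Type*}
    [Fintype ι] [DecidableEq ι] [Nonempty ι]
    (ρ σ : Matrix ι ι ℂ) (hρ : ρ.PosDef) (hρtr : ρ.trace = 1)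
    (hσ : σ.PosDef) (hσtr : σ.trace = 1) :
    HasDerivAt (fun t : ℝ => (mpow ρ (1 - t) * mpow σ t).trace.re)
      ((ρ * mlog σ).trace.re - (ρ * mlog ρ).trace.re) 0 := by
  have hre (A B : Matrix ι ι ℂ) : (A * B).trace.re = (∑ i, ∑ j, A i j * B j i).re := by
    simp only [Matrix.trace, Matrix.diag_apply, Matrix.mul_apply]
  have hA (i j : ι) : HasDerivAt (fun t : ℝ => mpow ρ (1 - t) i j) (-(ρ * mlog ρ) i j) 0 := by
    have h := hasDerivAt_mpow_apply hρ (1 - 0) i j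
    have h2 := h.scomp (0 : ℝ) ((hasDerivAt_id (0 : ℝ)).const_sub 1)
    simpa [Function.comp_def, ← cfc_mul_log hρ] using h2
  have hB (i j : ι) : HasDerivAt (fun t : ℝ => mpow σ t i j) (mlog σ i j) 0 := by
    simpa [mlog] using hasDerivAt_mpow_apply hσ 0 i j
  have hsum : HasDerivAt (fun t : ℝ => ∑ i, ∑ j, mpow ρ (1 - t) i j * mpow σ t j i)
      (∑ i, ∑ j, (-(ρ * mlog ρ) i j * mpow σ 0 j i + mpow ρ (1 - 0) i j * mlog σ j i)) 0 :=
    HasDerivAt.fun_sum fun i _ => HasDerivAt.fun_sum fun j _ => (hA i j).mul (hB j i)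
  have hd := Complex.reCLM.hasFDerivAt.comp_hasDerivAt (0 : ℝ) hsum
  simp only [hre]
  refine HasDerivAt.congr_deriv hd ?_
  rw [sub_zero, mpow_one hρ, mpow_zero hσ]
  simp only [Finset.sum_add_distrib, Matrix.one_apply, mul_ite, mul_one, mul_zero]
  simp [Finset.sum_neg_distrib, Matrix.trace, Matrix.mul_apply]
  ring
end

section
/- Let ι and κ be nonempty finite types, let ρ and σ be density matrices on ℂ indexed by (ι × κ) × (ι × κ), let X be any complex ι × ι matrix, and let t ∈ [0,1]. Then Re Tr((X ⊗ I_κ)† · ρ^{1−t} · (X ⊗ I_κ) · σ^{t}) ≤ Re Tr(X† · Tr_b(ρ)^{1−t} · X · Tr_b(σ)^{t}), where ⊗ is the Kronecker product and I_κ is the identity κ × κ matrix. (Uhlmann's interpolation inequality: the pull-back along the unital Schwarz map X ↦ X ⊗ I of the interpolation from ρ_L to σ_R is dominated by the interpolation from Tr_b(ρ)_L to Tr_b(σ)_R.) -/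
/-!
For eigenbases `uᵢ` of `ρ` and `vⱼ` of `σ`, with eigenvalues `pᵢ` and `qⱼ`, one has
`Re Tr(X† f(ρ) X g(σ)) = ∑ᵢⱼ f(pᵢ) g(qⱼ) |⟨uᵢ, X vⱼ⟩|²` (`trace_cfc_mul_cfc_re`).
So for `0 < t < 1` the scalar formula
`a^(1-t) b^t = c ∫₀^∞ s^(-t) · ab / (a + s b) ds` expresses the interpolated form as a positive
mixture over `s` of the forms `parallelForm`, in which `f(pᵢ) g(qⱼ)` is replaced by
`pᵢ qⱼ / (pᵢ + s qⱼ)`: up to the factor `s`, the parallel sum of left multiplication by `ρ` and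
`s` times right multiplication by `σ`.

A parallel sum has a variational description: it is the minimum of
`Tr(Y† ρ Y) + s Tr(Z† Z σ)` over all splittings `X = Y + Z` (`mul_parallelForm_add_le` and
`exists_add_eq_mul_parallelForm`). Both of these traces have the same value for
`(ρ, σ, Y ⊗ I, Z ⊗ I)` as for `(Tr_b ρ, Tr_b σ, Y, Z)`. Hence the optimal splitting on
the subsystem yields an admissible splitting of `X ⊗ I`, and the form of `X ⊗ I` is at most
that of `X` for every `s`. Integrating over `s` gives the inequality; the endpoints `t = 0, 1` are
equalities.
-/

open Matrix ComplexOrder Kronecker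

open MeasureTheory in
/-- The scalar integral formula: a weighted geometric mean is a mixture of parallel sums. -/
lemma rpow_mul_rpow_eq_integral {t : ℝ} (ht0 : 0 < t) (ht1 : t < 1) {a b : ℝ} (ha : 0 ≤ a)
    (hb : 0 ≤ b) :
    IntegrableOn (fun s : ℝ => s ^ (-t) * (a * b / (a + s * b))) (Set.Ioi 0) ∧
    a ^ (1 - t) * b ^ t = (∫ s in Set.Ioi 0, Real.rpowIntegrand₀₁ (1 - t) s 1)⁻¹ *
      ∫ s in Set.Ioi 0, s ^ (-t) * (a * b / (a + s * b)) := by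
  have hp : 1 - t ∈ Set.Ioo (0 : ℝ) 1 := ⟨by linarith, by linarith⟩
  rcases hb.eq_or_lt with rfl | hb
  · simp [Real.zero_rpow ht0.ne']
  have hx : 0 ≤ a / b := by positivity
  have key : Set.EqOn (fun s => b * Real.rpowIntegrand₀₁ (1 - t) s (a / b))
      (fun s : ℝ => s ^ (-t) * (a * b / (a + s * b))) (Set.Ioi 0) := by
    intro s hs
    have hs' : 0 < s := hs
    have e : 1 - t - 1 = -t := by ring
    simp only [Real.rpowIntegrand₀₁_eq_pow_div hp hs'.le hx, e]
    have h1 : s + a / b ≠ 0 := by positivity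
    have h2 : a + s * b ≠ 0 := by positivity
    have h3 : s * b + a ≠ 0 := by positivity
    field_simp
    ring
  constructor
  · exact ((Real.integrableOn_rpowIntegrand₀₁_Ioi hp hx).const_mul b).congr
      ((ae_restrict_iff' measurableSet_Ioi).mpr (ae_of_all _ key))
  · rw [← setIntegral_congr_fun measurableSet_Ioi key, integral_const_mul, mul_left_comm,
      ← Real.rpow_eq_const_mul_integral hp hx, Real.div_rpow ha hb.le, Real.rpow_sub hb,
      Real.rpow_one]
    have := Real.rpow_pos_of_pos hb t
    field_simp

lemma mul_parallel_mul_norm_sq_add_le {a b s : ℝ} (ha : 0 ≤ a) (hb : 0 ≤ b) (hs : 0 < s)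
    (y z : ℂ) :
    s * (a * b / (a + s * b)) * ‖y + z‖ ^ 2 ≤ a * ‖y‖ ^ 2 + s * (b * ‖z‖ ^ 2) := by
  rcases (show 0 ≤ a + s * b by positivity).eq_or_lt with h | h
  · rw [← h, div_zero, mul_zero, zero_mul]
    positivity
  have h1 : ‖y + z‖ ^ 2 ≤ (‖y‖ + ‖z‖) ^ 2 := by gcongr; exact norm_add_le _ _
  have h2 : s * (a * b / (a + s * b)) * ‖y + z‖ ^ 2
      ≤ s * (a * b / (a + s * b)) * (‖y‖ + ‖z‖) ^ 2 := by gcongr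
  refine h2.trans ?_
  rw [mul_div_assoc', div_mul_eq_mul_div, div_le_iff₀ h]
  nlinarith [sq_nonneg (a * ‖y‖ - s * b * ‖z‖)]

/-- The splitting of `w` in the ratio `s b : a` attains the bound
`mul_parallel_mul_norm_sq_add_le`. -/
lemma mul_parallel_mul_norm_sq_eq {a b s : ℝ} (ha : 0 ≤ a) (hb : 0 ≤ b) (hs : 0 < s) (w : ℂ) :
    a * ‖((s * b / (a + s * b) : ℝ) : ℂ) * w‖ ^ 2 +
      s * (b * ‖w - ((s * b / (a + s * b) : ℝ) : ℂ) * w‖ ^ 2)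
      = s * (a * b / (a + s * b)) * ‖w‖ ^ 2 := by
  have e : w - ((s * b / (a + s * b) : ℝ) : ℂ) * w
      = ((1 - s * b / (a + s * b) : ℝ) : ℂ) * w := by push_cast; ring
  rw [e, norm_mul, norm_mul, Complex.norm_real, Complex.norm_real, mul_pow, mul_pow,
    Real.norm_eq_abs, Real.norm_eq_abs, sq_abs, sq_abs]
  rcases (show 0 ≤ a + s * b by positivity).eq_or_lt with h | h
  · have h1 : s * b = 0 := by nlinarith [mul_nonneg hs.le hb]
    have h2 : b = 0 := by simpa [hs.ne'] using h1
    have h3 : a = 0 := by nlinarith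
    simp [h2, h3]
  · field_simp
    ring

section Spectral

variable {n : Type*} [Fintype n] [DecidableEq n]

/-- The matrix `⟨uᵢ, X vⱼ⟩` of `X` between the eigenbases of two Hermitian matrices. -/
noncomputable def eigCoord {ρ σ : Matrix n n ℂ} (hρ : ρ.IsHermitian) (hσ : σ.IsHermitian)
    (X : Matrix n n ℂ) : Matrix n n ℂ :=
  (hρ.eigenvectorUnitary : Matrix n n ℂ)ᴴ * X * (hσ.eigenvectorUnitary : Matrix n n ℂ)

lemma trace_diagonal_re (W : Matrix n n ℂ) (d e : n → ℝ) :
    (Wᴴ * diagonal (fun i => (d i : ℂ)) * W * diagonal (fun i => (e i : ℂ))).trace.re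
      = ∑ i, ∑ j, d i * e j * ‖W i j‖ ^ 2 := by
  rw [Finset.sum_comm]
  simp only [trace, diag_apply, mul_diagonal, mul_apply (M := Wᴴ * _) (N := W), Complex.re_sum,
    Finset.sum_mul, conjTranspose_apply]
  refine Finset.sum_congr rfl fun j _ => Finset.sum_congr rfl fun i _ => ?_
  rw [← Complex.normSq_eq_norm_sq]
  have : star (W i j) * (d i : ℂ) * W i j * (e j : ℂ)
      = ((d i * e j * Complex.normSq (W i j) : ℝ) : ℂ) := by
    rw [Complex.ofReal_mul, Complex.normSq_eq_conj_mul_self]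
    push_cast
    simp only [RCLike.star_def]
    ring
  rw [this, Complex.ofReal_re]

lemma trace_cfc_mul_cfc_re {ρ σ : Matrix n n ℂ} (hρ : ρ.IsHermitian) (hσ : σ.IsHermitian)
    (f g : ℝ → ℝ) (X : Matrix n n ℂ) :
    (Xᴴ * cfc f ρ * X * cfc g σ).trace.re = ∑ i, ∑ j,
      f (hρ.eigenvalues i) * g (hσ.eigenvalues j) * ‖eigCoord hρ hσ X i j‖ ^ 2 := by
  rw [← trace_diagonal_re (eigCoord hρ hσ X) (fun i => f (hρ.eigenvalues i))
    (fun j => g (hσ.eigenvalues j)), hρ.cfc_eq, hσ.cfc_eq, IsHermitian.cfc, IsHermitian.cfc,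
    Unitary.conjStarAlgAut_apply, Unitary.conjStarAlgAut_apply, eigCoord]
  simp only [conjTranspose_mul, conjTranspose_conjTranspose, star_eq_conjTranspose]
  congr 1
  rw [← Matrix.mul_assoc, trace_mul_comm]
  simp only [Matrix.mul_assoc]
  rfl

lemma trace_conjTranspose_mul_mul_re {ρ σ : Matrix n n ℂ} (hρ : ρ.IsHermitian)
    (hσ : σ.IsHermitian) (Y : Matrix n n ℂ) :
    (Yᴴ * ρ * Y).trace.re
      = ∑ i, ∑ j, hρ.eigenvalues i * ‖eigCoord hρ hσ Y i j‖ ^ 2 := by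
  have := trace_cfc_mul_cfc_re hρ hσ id (fun _ => 1) Y
  rw [cfc_id ℝ ρ hρ.isSelfAdjoint, cfc_const_one ℝ σ hσ.isSelfAdjoint] at this
  simpa using this

lemma trace_conjTranspose_mul_self_mul_re {ρ σ : Matrix n n ℂ} (hρ : ρ.IsHermitian)
    (hσ : σ.IsHermitian) (Z : Matrix n n ℂ) :
    (Zᴴ * Z * σ).trace.re
      = ∑ i, ∑ j, hσ.eigenvalues j * ‖eigCoord hρ hσ Z i j‖ ^ 2 := by
  have := trace_cfc_mul_cfc_re hρ hσ (fun _ => 1) id Z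
  rw [cfc_id ℝ σ hσ.isSelfAdjoint, cfc_const_one ℝ ρ hρ.isSelfAdjoint] at this
  simpa using this

/-- `s⁻¹` times the quadratic form, at `X`, of the parallel sum of left multiplication by `ρ` and
`s` times right multiplication by `σ`. The convention `0 / 0 = 0` is the right one on the common
kernel. -/
noncomputable def parallelForm (s : ℝ) {ρ σ : Matrix n n ℂ} (hρ : ρ.IsHermitian)
    (hσ : σ.IsHermitian) (X : Matrix n n ℂ) : ℝ :=
  ∑ i, ∑ j, hρ.eigenvalues i * hσ.eigenvalues j / (hρ.eigenvalues i + s * hσ.eigenvalues j) *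
    ‖eigCoord hρ hσ X i j‖ ^ 2

/-- Every splitting bounds the parallel sum from above. -/
lemma mul_parallelForm_add_le {ρ σ : Matrix n n ℂ} (hρ : ρ.PosSemidef) (hσ : σ.PosSemidef)
    {s : ℝ} (hs : 0 < s) (Y Z : Matrix n n ℂ) :
    s * parallelForm s hρ.1 hσ.1 (Y + Z)
      ≤ (Yᴴ * ρ * Y).trace.re + s * (Zᴴ * Z * σ).trace.re := by
  rw [trace_conjTranspose_mul_mul_re hρ.1 hσ.1, trace_conjTranspose_mul_self_mul_re hρ.1 hσ.1,
    parallelForm]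
  simp only [Finset.mul_sum, ← Finset.sum_add_distrib]
  refine Finset.sum_le_sum fun i _ => Finset.sum_le_sum fun j _ => ?_
  have e : eigCoord hρ.1 hσ.1 (Y + Z) i j
      = eigCoord hρ.1 hσ.1 Y i j + eigCoord hρ.1 hσ.1 Z i j := by
    simp [eigCoord, Matrix.mul_add, Matrix.add_mul]
  rw [e, ← mul_assoc]
  exact mul_parallel_mul_norm_sq_add_le (hρ.eigenvalues_nonneg i) (hσ.eigenvalues_nonneg j) hs _ _

/-- Some splitting attains the parallel sum. -/
lemma exists_add_eq_mul_parallelForm {ρ σ : Matrix n n ℂ} (hρ : ρ.PosSemidef)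
    (hσ : σ.PosSemidef) {s : ℝ} (hs : 0 < s) (X : Matrix n n ℂ) :
    ∃ Y Z : Matrix n n ℂ, Y + Z = X ∧
      (Yᴴ * ρ * Y).trace.re + s * (Zᴴ * Z * σ).trace.re = s * parallelForm s hρ.1 hσ.1 X := by
  set U : Matrix n n ℂ := (hρ.1.eigenvectorUnitary : Matrix n n ℂ) with hU
  set V : Matrix n n ℂ := (hσ.1.eigenvectorUnitary : Matrix n n ℂ) with hV
  have hUU : Uᴴ * U = 1 := Unitary.coe_star_mul_self hρ.1.eigenvectorUnitary
  have hVV : Vᴴ * V = 1 := Unitary.coe_star_mul_self hσ.1.eigenvectorUnitary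
  -- the entrywise optimal splitting, transported back from the eigenbases
  set W : Matrix n n ℂ := Matrix.of fun i j =>
    ((s * hσ.1.eigenvalues j / (hρ.1.eigenvalues i + s * hσ.1.eigenvalues j) : ℝ) : ℂ) *
      eigCoord hρ.1 hσ.1 X i j with hW
  have hY : eigCoord hρ.1 hσ.1 (U * W * Vᴴ) = W := by
    rw [eigCoord, ← hU, ← hV, Matrix.mul_assoc, Matrix.mul_assoc, hVV, Matrix.mul_one,
      ← Matrix.mul_assoc, hUU, Matrix.one_mul]
  have hZ : eigCoord hρ.1 hσ.1 (X - U * W * Vᴴ) = eigCoord hρ.1 hσ.1 X - W := by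
    conv_rhs => rw [← hY]
    simp only [eigCoord, Matrix.mul_sub, Matrix.sub_mul]
  refine ⟨U * W * Vᴴ, X - U * W * Vᴴ, add_sub_cancel _ _, ?_⟩
  rw [trace_conjTranspose_mul_mul_re hρ.1 hσ.1, trace_conjTranspose_mul_self_mul_re hρ.1 hσ.1,
    parallelForm, hY, hZ]
  simp only [Finset.mul_sum, ← Finset.sum_add_distrib]
  refine Finset.sum_congr rfl fun i _ => Finset.sum_congr rfl fun j _ => ?_
  rw [← mul_assoc s (_ / _)]
  exact mul_parallel_mul_norm_sq_eq (hρ.eigenvalues_nonneg i) (hσ.eigenvalues_nonneg j) hs _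

open MeasureTheory in
lemma trace_mpow_eq_integral {ρ σ : Matrix n n ℂ} (hρ : ρ.PosSemidef) (hσ : σ.PosSemidef)
    {t : ℝ} (ht0 : 0 < t) (ht1 : t < 1) (X : Matrix n n ℂ) :
    IntegrableOn (fun s : ℝ => s ^ (-t) * parallelForm s hρ.1 hσ.1 X) (Set.Ioi 0) ∧
    (Xᴴ * mpow ρ (1 - t) * X * mpow σ t).trace.re =
      (∫ s in Set.Ioi 0, Real.rpowIntegrand₀₁ (1 - t) s 1)⁻¹ *
        ∫ s in Set.Ioi 0, s ^ (-t) * parallelForm s hρ.1 hσ.1 X := by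
  have key := fun i j => rpow_mul_rpow_eq_integral ht0 ht1 (hρ.eigenvalues_nonneg i)
    (hσ.eigenvalues_nonneg j)
  have e : (fun s : ℝ => s ^ (-t) * parallelForm s hρ.1 hσ.1 X) = fun s => ∑ i, ∑ j,
      (s ^ (-t) * (hρ.1.eigenvalues i * hσ.1.eigenvalues j /
        (hρ.1.eigenvalues i + s * hσ.1.eigenvalues j))) * ‖eigCoord hρ.1 hσ.1 X i j‖ ^ 2 := by
    funext s
    simp only [parallelForm, Finset.mul_sum, mul_assoc]
  have hint := fun i j => (key i j).1.mul_const (‖eigCoord hρ.1 hσ.1 X i j‖ ^ 2)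
  constructor
  · rw [e]
    exact integrable_finsetSum _ fun i _ => integrable_finsetSum _ fun j _ => hint i j
  · rw [e, integral_finsetSum _ fun i _ => integrable_finsetSum _ fun j _ => hint i j, mpow, mpow,
      trace_cfc_mul_cfc_re hρ.1 hσ.1, Finset.mul_sum]
    refine Finset.sum_congr rfl fun i _ => ?_
    rw [integral_finsetSum _ fun j _ => hint i j, Finset.mul_sum]
    refine Finset.sum_congr rfl fun j _ => ?_
    rw [integral_mul_const, ← mul_assoc]
    exact congrArg (· * _) (key i j).2

end Spectral

lemma posSemidef_trB {ι κ : Type*} [Fintype κ] {A : Matrix (ι × κ) (ι × κ) ℂ}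
    (hA : A.PosSemidef) : (trB A).PosSemidef := by
  have : trB A = ∑ k : κ, A.submatrix (fun i => (i, k)) (fun i => (i, k)) := by
    ext i j
    simp [trB, Matrix.sum_apply]
  rw [this]
  exact posSemidef_sum _ fun k _ => hA.submatrix _

/-- The partial trace is the adjoint of `M ↦ M ⊗ I`. -/
lemma trace_kronecker_one_mul {ι κ : Type*} [Fintype ι] [Fintype κ] [DecidableEq κ]
    (M : Matrix ι ι ℂ) (A : Matrix (ι × κ) (ι × κ) ℂ) :
    ((M ⊗ₖ (1 : Matrix κ κ ℂ)) * A).trace = (M * trB A).trace := by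
  simp only [trace, diag_apply, mul_apply, trB, Matrix.of_apply, Fintype.sum_prod_type,
    kroneckerMap_apply, Matrix.one_apply, Finset.mul_sum]
  refine Finset.sum_congr rfl fun i _ => ?_
  rw [Finset.sum_comm]
  refine Finset.sum_congr rfl fun j _ => ?_
  simp

lemma trace_kronecker_left {ι κ : Type*} [Fintype ι] [Fintype κ] [DecidableEq κ]
    (Y : Matrix ι ι ℂ) (A : Matrix (ι × κ) (ι × κ) ℂ) :
    ((Y ⊗ₖ (1 : Matrix κ κ ℂ))ᴴ * A * (Y ⊗ₖ (1 : Matrix κ κ ℂ))).trace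
      = (Yᴴ * trB A * Y).trace := by
  rw [trace_mul_comm, ← Matrix.mul_assoc, conjTranspose_kronecker, conjTranspose_one,
    ← mul_kronecker_mul, Matrix.one_mul, trace_kronecker_one_mul, trace_mul_comm (Yᴴ * _),
    Matrix.mul_assoc]

lemma trace_kronecker_right {ι κ : Type*} [Fintype ι] [Fintype κ] [DecidableEq κ]
    (Z : Matrix ι ι ℂ) (A : Matrix (ι × κ) (ι × κ) ℂ) :
    ((Z ⊗ₖ (1 : Matrix κ κ ℂ))ᴴ * (Z ⊗ₖ (1 : Matrix κ κ ℂ)) * A).trace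
      = (Zᴴ * Z * trB A).trace := by
  rw [conjTranspose_kronecker, conjTranspose_one, ← mul_kronecker_mul, Matrix.one_mul,
    trace_kronecker_one_mul]

lemma parallelForm_kronecker_le {ι κ : Type*} [Fintype ι] [DecidableEq ι] [Fintype κ]
    [DecidableEq κ] {ρ σ : Matrix (ι × κ) (ι × κ) ℂ} (hρ : ρ.PosSemidef)
    (hσ : σ.PosSemidef) {s : ℝ} (hs : 0 < s) (X : Matrix ι ι ℂ) :
    parallelForm s hρ.1 hσ.1 (X ⊗ₖ (1 : Matrix κ κ ℂ))
      ≤ parallelForm s (posSemidef_trB hρ).1 (posSemidef_trB hσ).1 X := by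
  obtain ⟨Y, Z, rfl, h⟩ :=
    exists_add_eq_mul_parallelForm (posSemidef_trB hρ) (posSemidef_trB hσ) hs X
  refine le_of_mul_le_mul_left ?_ hs
  rw [← h, add_kronecker, ← trace_kronecker_left, ← trace_kronecker_right]
  exact mul_parallelForm_add_le hρ hσ hs _ _

lemma mpow_zero_s15 {n : Type*} [Fintype n] [DecidableEq n] {A : Matrix n n ℂ}
    (hA : A.IsHermitian) : mpow A 0 = 1 := by
  have : (fun x : ℝ => Real.rpow x 0) = fun _ => 1 := funext Real.rpow_zero
  rw [mpow, this, cfc_const_one ℝ A hA.isSelfAdjoint]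

lemma mpow_one_s15 {n : Type*} [Fintype n] [DecidableEq n] {A : Matrix n n ℂ}
    (hA : A.IsHermitian) : mpow A 1 = A := by
  have : (fun x : ℝ => Real.rpow x 1) = id := funext Real.rpow_one
  rw [mpow, this, cfc_id ℝ A hA.isSelfAdjoint]

/-- **Uhlmann's interpolation inequality.** For density matrices `ρ`, `σ` on the composite
system, any matrix `X` on the subsystem and `t ∈ [0,1]`,
`Re Tr((X ⊗ I)† · ρ^{1−t} · (X ⊗ I) · σ^t) ≤ Re Tr(X† · Tr_b(ρ)^{1−t} · X · Tr_b(σ)^t)`. -/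
theorem uhlmann_interpolation_inequality {ι κ : Type*}
    [Fintype ι] [DecidableEq ι] [Nonempty ι] [Fintype κ] [DecidableEq κ] [Nonempty κ]
    (ρ σ : Matrix (ι × κ) (ι × κ) ℂ) (hρ : ρ.PosSemidef) (hρtr : ρ.trace = 1)
    (hσ : σ.PosSemidef) (hσtr : σ.trace = 1)
    (X : Matrix ι ι ℂ) (t : ℝ) (ht : t ∈ Set.Icc (0:ℝ) 1) :
    ((X ⊗ₖ (1 : Matrix κ κ ℂ))ᴴ * mpow ρ (1 - t) * (X ⊗ₖ (1 : Matrix κ κ ℂ)) *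
        mpow σ t).trace.re ≤
      (Xᴴ * mpow (trB ρ) (1 - t) * X * mpow (trB σ) t).trace.re := by
  have hρ' := posSemidef_trB hρ
  have hσ' := posSemidef_trB hσ
  rcases ht.1.eq_or_lt with rfl | ht0
  · rw [sub_zero, mpow_one_s15 hρ.1, mpow_one_s15 hρ'.1, mpow_zero_s15 hσ.1, mpow_zero_s15 hσ'.1, Matrix.mul_one,
      Matrix.mul_one, trace_kronecker_left]
  rcases ht.2.eq_or_lt with rfl | ht1
  · rw [sub_self, mpow_one_s15 hσ.1, mpow_one_s15 hσ'.1, mpow_zero_s15 hρ.1, mpow_zero_s15 hρ'.1, Matrix.mul_one,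
      Matrix.mul_one, trace_kronecker_right]
  obtain ⟨hint, h⟩ := trace_mpow_eq_integral hρ hσ ht0 ht1 (X ⊗ₖ (1 : Matrix κ κ ℂ))
  obtain ⟨hint', h'⟩ := trace_mpow_eq_integral hρ' hσ' ht0 ht1 X
  rw [h, h']
  have hp : 1 - t ∈ Set.Ioo (0 : ℝ) 1 := ⟨by linarith, by linarith⟩
  refine mul_le_mul_of_nonneg_left ?_
    (inv_nonneg.mpr (Real.integral_rpowIntegrand₀₁_one_pos hp).le)
  refine MeasureTheory.setIntegral_mono_on hint hint' measurableSet_Ioi fun s hs => ?_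
  exact mul_le_mul_of_nonneg_left (parallelForm_kronecker_le hρ hσ hs X)
    (Real.rpow_nonneg (le_of_lt hs) _)
end
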